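/- (Martingale Lemma 1.) Let $B \in \mathbb{N} = \{0,1,2,\dots\}$, and let $(v_k)_{k\ge 0}$, $a_1$ and $(a_{2,k})_{k\ge 0}$ be real random variables on a probability space such that, almost surely, $v_k \ge 0$, $a_1 \ge 0$, $a_{2,k} \ge 0$ and $a_1 + a_{2,k} \le 1$ for every $k$, and the sequence $(a_{2,k})_k$ is nonincreasing. Let $k^* \in \mathbb{N}$ and suppose that, for every $k \ge k^*$, almost surely $$v_{k+1} \le a_1 v_k + a_{2,k} \max_{\max(k-B,0) \le \hat k \le k} v_{\hat k}.$$ Let $\bar k \in \mathbb{N}$ satisfy $\bar k \ge k^*$ and $\bar k \ge B$, and assume $a_1 + a_{2,\bar k} > 0$ almost surely. Set $$\rho := (a_1 + a_{2,\bar k})^{1/(B+1)}, \qquad V_0 := \frac{1}{\rho^{\bar k}} \max_{\bar k - B \le j \le \bar k} v_j .$$ Then, almost surely, $v_{\bar k+m} \le \rho^{\bar k+B+1} V_0$ for every $1 \le m \le B+1$, and $v_k \le \rho^k V_0$ for every $k \ge \bar k + B + 1$. (In particular this covers deterministic sequences, and the same bounds hold with any larger constant in place of $V_0$.) -/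

import Mathlib

/-- The maximum of a real sequence over the delay window `max (k - B) 0 ≤ j ≤ k`
(natural-number subtraction truncates the window at `0`). -/
noncomputable def windowMax (B : ℕ) (v : ℕ → ℝ) (k : ℕ) : ℝ :=
  (Finset.Icc (k - B) k).sup' (Finset.nonempty_Icc.mpr (Nat.sub_le k B)) v

/-- The ratio `ρ = (a₁ + a₂ k̄) ^ (1 / (B + 1))`. -/
noncomputable def decayRatio (B : ℕ) (a₁ : ℝ) (a₂ : ℕ → ℝ) (kbar : ℕ) : ℝ :=
  (a₁ + a₂ kbar) ^ ((1 : ℝ) / ((B : ℝ) + 1))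

/-- The constant `V₀ = (max_{k̄ - B ≤ j ≤ k̄} v j) / ρ ^ k̄`, the least one for which every
term of the window ending at `k̄` is at most `ρ ^ k̄ * V₀`. -/
noncomputable def initialConst (B : ℕ) (v : ℕ → ℝ) (a₁ : ℝ) (a₂ : ℕ → ℝ) (kbar : ℕ) : ℝ :=
  windowMax B v kbar / decayRatio B a₁ a₂ kbar ^ kbar

theorem windowMax_le {B : ℕ} {v : ℕ → ℝ} {k : ℕ} {C : ℝ}
    (h : ∀ j, k - B ≤ j → j ≤ k → v j ≤ C) : windowMax B v k ≤ C :=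
  Finset.sup'_le _ _ fun j hj => h j (Finset.mem_Icc.mp hj).1 (Finset.mem_Icc.mp hj).2

theorem le_windowMax {B : ℕ} (v : ℕ → ℝ) {k j : ℕ} (h₁ : k - B ≤ j) (h₂ : j ≤ k) :
    v j ≤ windowMax B v k :=
  Finset.le_sup' v (Finset.mem_Icc.mpr ⟨h₁, h₂⟩)

theorem windowMax_nonneg {B : ℕ} {v : ℕ → ℝ} (hv : ∀ k, 0 ≤ v k) (k : ℕ) :
    0 ≤ windowMax B v k :=
  (hv k).trans (le_windowMax v (Nat.sub_le k B) le_rfl)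

theorem decayRatio_pos (B : ℕ) {a₁ : ℝ} {a₂ : ℕ → ℝ} {kbar : ℕ} (h : 0 < a₁ + a₂ kbar) :
    0 < decayRatio B a₁ a₂ kbar :=
  Real.rpow_pos_of_pos h _

theorem decayRatio_le_one (B : ℕ) {a₁ : ℝ} {a₂ : ℕ → ℝ} {kbar : ℕ} (h₀ : 0 ≤ a₁ + a₂ kbar)
    (h₁ : a₁ + a₂ kbar ≤ 1) : decayRatio B a₁ a₂ kbar ≤ 1 :=
  Real.rpow_le_one h₀ h₁ (by positivity)

theorem decayRatio_pow (B : ℕ) {a₁ : ℝ} {a₂ : ℕ → ℝ} {kbar : ℕ} (h : 0 ≤ a₁ + a₂ kbar) :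
    decayRatio B a₁ a₂ kbar ^ (B + 1) = a₁ + a₂ kbar := by
  have := Real.rpow_inv_natCast_pow h (Nat.succ_ne_zero B)
  simpa [decayRatio, one_div] using this

/-- A sequence with `v (k + 1) ≤ c * max_{k - B ≤ j ≤ k} v j` from `n` on, where `c ≤ 1`, is at
most `c` times its maximum over the window ending at `n` at every later time. -/
theorem le_mul_windowMax_of_delayed_contraction {B n : ℕ} {v : ℕ → ℝ} {c : ℝ}
    (hv : ∀ k, 0 ≤ v k) (hc₀ : 0 ≤ c) (hc₁ : c ≤ 1)
    (hstep : ∀ k, n ≤ k → v (k + 1) ≤ c * windowMax B v k) (k : ℕ) (hk : n < k) :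
    v k ≤ c * windowMax B v n := by
  induction k using Nat.strong_induction_on with
  | _ k ih =>
    obtain ⟨l, rfl⟩ : ∃ l, k = l + 1 := ⟨k - 1, by omega⟩
    refine (hstep l (by omega)).trans (mul_le_mul_of_nonneg_left (windowMax_le ?_) hc₀)
    intro j hj₁ hj₂
    rcases le_or_gt j n with hj | hj
    · exact le_windowMax v (by omega) hj
    · exact (ih j (by omega) hj).trans
        (mul_le_of_le_one_left (windowMax_nonneg hv n) hc₁)

/-- If `v (k + 1) ≤ r ^ (B + 1) * max_{k - B ≤ j ≤ k} v j` from `n` on and `v k ≤ r ^ k * V` for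
the `B + 1` indices following `n`, then this bound holds at every later time. -/
theorem le_pow_mul_of_delayed_contraction {B n : ℕ} {v : ℕ → ℝ} {r V : ℝ}
    (hr₀ : 0 ≤ r) (hr₁ : r ≤ 1) (hV : 0 ≤ V)
    (hstep : ∀ k, n ≤ k → v (k + 1) ≤ r ^ (B + 1) * windowMax B v k)
    (hinit : ∀ k, n < k → k ≤ n + B + 1 → v k ≤ r ^ k * V) (k : ℕ) (hk : n < k) :
    v k ≤ r ^ k * V := by
  induction k using Nat.strong_induction_on with
  | _ k ih =>
    rcases le_or_gt k (n + B + 1) with hkB | hkB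
    · exact hinit k hk hkB
    obtain ⟨l, rfl⟩ : ∃ l, k = l + 1 := ⟨k - 1, by omega⟩
    have hwin : windowMax B v l ≤ r ^ (l - B) * V := by
      refine windowMax_le fun j hj₁ hj₂ => (ih j (by omega) (by omega)).trans ?_
      exact mul_le_mul_of_nonneg_right (pow_le_pow_of_le_one hr₀ hr₁ hj₁) hV
    calc v (l + 1) ≤ r ^ (B + 1) * windowMax B v l := hstep l (by omega)
      _ ≤ r ^ (B + 1) * (r ^ (l - B) * V) := mul_le_mul_of_nonneg_left hwin (pow_nonneg hr₀ _)
      _ = r ^ (l + 1) * V := by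
        rw [← mul_assoc, ← pow_add, show B + 1 + (l - B) = l + 1 by omega]

/-- The deterministic form of the delayed recursion estimate. -/
theorem geometric_decay_of_delayed_recursion {B kbar : ℕ} {v a₂ : ℕ → ℝ} {a₁ : ℝ}
    (hv : ∀ k, 0 ≤ v k) (ha₁ : 0 ≤ a₁) (hanti : Antitone a₂)
    (hsum : a₁ + a₂ kbar ≤ 1)
    (hrec : ∀ k, kbar ≤ k → v (k + 1) ≤ a₁ * v k + a₂ k * windowMax B v k)
    (hpos : 0 < a₁ + a₂ kbar) :
    (∀ m, 1 ≤ m → m ≤ B + 1 → v (kbar + m) ≤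
      decayRatio B a₁ a₂ kbar ^ (kbar + B + 1) * initialConst B v a₁ a₂ kbar) ∧
    (∀ k, kbar + B + 1 ≤ k → v k ≤
      decayRatio B a₁ a₂ kbar ^ k * initialConst B v a₁ a₂ kbar) := by
  have hr₀ := decayRatio_pos B hpos
  have hr₁ := decayRatio_le_one B hpos.le hsum
  have hrpow := decayRatio_pow B hpos.le
  have hconst : decayRatio B a₁ a₂ kbar ^ (kbar + B + 1) * initialConst B v a₁ a₂ kbar =
      (a₁ + a₂ kbar) * windowMax B v kbar := by
    rw [initialConst, add_assoc, pow_add, hrpow]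
    field_simp
  have hV : 0 ≤ initialConst B v a₁ a₂ kbar :=
    div_nonneg (windowMax_nonneg hv kbar) (pow_nonneg hr₀.le _)
  have hstep : ∀ k, kbar ≤ k → v (k + 1) ≤ (a₁ + a₂ kbar) * windowMax B v k := by
    intro k hk
    have hw := windowMax_nonneg (B := B) hv k
    calc v (k + 1) ≤ a₁ * v k + a₂ k * windowMax B v k := hrec k hk
      _ ≤ a₁ * windowMax B v k + a₂ kbar * windowMax B v k :=
        add_le_add
          (mul_le_mul_of_nonneg_left (le_windowMax v (Nat.sub_le k B) le_rfl) ha₁)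
          (mul_le_mul_of_nonneg_right (hanti hk) hw)
      _ = (a₁ + a₂ kbar) * windowMax B v k := by ring
  have hlate : ∀ k, kbar < k → v k ≤
      decayRatio B a₁ a₂ kbar ^ (kbar + B + 1) * initialConst B v a₁ a₂ kbar := by
    rw [hconst]
    exact le_mul_windowMax_of_delayed_contraction hv hpos.le hsum hstep
  refine ⟨fun m hm _ => hlate _ (by omega), fun k hk => ?_⟩
  refine le_pow_mul_of_delayed_contraction hr₀.le hr₁ hV (by rwa [hrpow]) ?_ k
    (by omega : kbar < k)
  intro j hj₁ hj₂
  exact (hlate j hj₁).trans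
    (mul_le_mul_of_nonneg_right (pow_le_pow_of_le_one hr₀.le hr₁ hj₂) hV)

/-- A nonnegative random sequence with the almost sure delayed recursion
`v (k+1) ≤ a₁ v k + a₂ k · max_{k-B ≤ j ≤ k} v j` decays geometrically almost surely. No
measurability of the random variables is needed. -/
theorem martingale_lemma_one
    {Ω : Type*} [MeasurableSpace Ω] (μ : MeasureTheory.Measure Ω)
    [MeasureTheory.IsProbabilityMeasure μ]
    (B : ℕ) (v : ℕ → Ω → ℝ) (a₁ : Ω → ℝ) (a₂ : ℕ → Ω → ℝ)
    (hv : ∀ k, ∀ᵐ ω ∂μ, 0 ≤ v k ω)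
    (ha₁ : ∀ᵐ ω ∂μ, 0 ≤ a₁ ω)
    (ha₂ : ∀ k, ∀ᵐ ω ∂μ, 0 ≤ a₂ k ω)
    (ha₂anti : ∀ᵐ ω ∂μ, Antitone (fun k => a₂ k ω))
    (hsum : ∀ k, ∀ᵐ ω ∂μ, a₁ ω + a₂ k ω ≤ 1)
    (kstar : ℕ)
    (hrec : ∀ k, kstar ≤ k → ∀ᵐ ω ∂μ,
      v (k + 1) ω ≤ a₁ ω * v k ω + a₂ k ω * windowMax B (fun j => v j ω) k)
    (kbar : ℕ) (hkbar₁ : kstar ≤ kbar) (hkbar₂ : B ≤ kbar)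
    (hpos : ∀ᵐ ω ∂μ, 0 < a₁ ω + a₂ kbar ω) :
    ∀ᵐ ω ∂μ,
      (∀ m, 1 ≤ m → m ≤ B + 1 →
        v (kbar + m) ω ≤
          decayRatio B (a₁ ω) (fun k => a₂ k ω) kbar ^ (kbar + B + 1) *
            initialConst B (fun k => v k ω) (a₁ ω) (fun k => a₂ k ω) kbar) ∧
      (∀ k, kbar + B + 1 ≤ k →
        v k ω ≤
          decayRatio B (a₁ ω) (fun k => a₂ k ω) kbar ^ k *
            initialConst B (fun k => v k ω) (a₁ ω) (fun k => a₂ k ω) kbar) := by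
  have hrec' : ∀ᵐ ω ∂μ, ∀ k, kstar ≤ k →
      v (k + 1) ω ≤ a₁ ω * v k ω + a₂ k ω * windowMax B (fun j => v j ω) k :=
    MeasureTheory.ae_all_iff.mpr fun k => by
      by_cases hk : kstar ≤ k
      · filter_upwards [hrec k hk] with ω hω _ using hω
      · exact Filter.Eventually.of_forall fun _ h => absurd h hk
  filter_upwards [MeasureTheory.ae_all_iff.mpr hv, ha₁, ha₂anti, hsum kbar, hrec', hpos]
    with ω hvω ha₁ω hantiω hsumω hrecω hposω
  exact geometric_decay_of_delayed_recursion hvω ha₁ω hantiω hsumω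
    (fun k hk => hrecω k (hkbar₁.trans hk)) hposω
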